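/- Let η > 1, let u_η be the exact high-contrast solution on [−2,2], and let u_0, u_1, u_2, … be the asymptotic expansion terms. Then for every integer J ≥ 0 and every x ∈ [−2,2], the truncation error satisfies |u_η(x) − Σ_{j=0}^{J} η^{−j} u_j(x)| ≤ 2/(η^J (η − 1)); in particular the partial sums converge to u_η uniformly on [−2,2]. -/

import Mathlib

/-- The exact high-contrast solution on `[-2,2]`. -/
noncomputable def uEta (η : ℝ) : ℝ → ℝ := fun x =>
  if x < -1 then η / (1 + η) * (2 * (x + 2))
  else if x < 1 then η / (1 + η) * (2 * (1 + (x + 1) / η))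
  else η / (1 + η) * (2 * (1 + 2 / η + (x - 1)))

/-- The terms of the asymptotic expansion of `u_η`. -/
noncomputable def uTerm : ℕ → ℝ → ℝ
  | 0 => fun x => if x < -1 then 2 * (x + 2) else if x < 1 then 2 else 2 * x
  | j + 1 => fun x =>
      if x < -1 then (-1 : ℝ) ^ (j + 1) * (2 * (x + 2))
      else if x < 1 then (-1 : ℝ) ^ (j + 2) * (2 * x)
      else (-1 : ℝ) ^ (j + 1) * (2 * (x - 2))

/-!
The terms of order at least one all have the same profile, `u_{j+1} = (-1)^j u_1`, so the series is
`u_0 + (u_1 / η) ∑ (-1/η)^j`. It sums to `u_0 + u_1 / (1 + η)`, which is `u_η`, and the remainder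
after order `J` is the geometric remainder `(-1/η)^J u_1 / (1 + η)`.
-/

lemma tendstoUniformlyOn_of_dist_le {ι α β : Type*} [PseudoMetricSpace β] {F : ι → α → β}
    {f : α → β} {s : Set α} {l : Filter ι} {b : ι → ℝ} (hb : Filter.Tendsto b l (nhds 0))
    (hF : ∀ᶠ i in l, ∀ x ∈ s, dist (f x) (F i x) ≤ b i) : TendstoUniformlyOn F f l s := by
  rw [Metric.tendstoUniformlyOn_iff]
  intro ε hε
  filter_upwards [hF, hb.eventually_lt_const hε] with i hFi hbi x hx
  exact (hFi x hx).trans_lt hbi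

lemma tendsto_div_pow_mul_atTop_nhds_zero {r c : ℝ} (hr : 1 < r) (hc : 0 < c) (a : ℝ) :
    Filter.Tendsto (fun n : ℕ => a / (r ^ n * c)) Filter.atTop (nhds 0) :=
  ((tendsto_pow_atTop_atTop_of_one_lt hr).atTop_mul_const hc).const_div_atTop a

lemma uTerm_succ (j : ℕ) (x : ℝ) : uTerm (j + 1) x = (-1) ^ j * uTerm 1 x := by
  simp only [uTerm]
  split_ifs <;> ring

lemma abs_uTerm_one_le {x : ℝ} (hx : x ∈ Set.Icc (-2 : ℝ) 2) : |uTerm 1 x| ≤ 2 := by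
  obtain ⟨hx_left, hx_right⟩ := hx
  rw [abs_le]
  simp only [uTerm]
  norm_num only
  split_ifs <;> constructor <;> linarith

lemma uEta_eq_uTerm_zero_add {η : ℝ} (hη : η ≠ 0) (hη' : 1 + η ≠ 0) (x : ℝ) :
    uEta η x = uTerm 0 x + uTerm 1 x / (1 + η) := by
  simp only [uEta, uTerm]
  split_ifs <;> field_simp <;> ring

lemma uEta_sub_sum_uTerm {η : ℝ} (hη : η ≠ 0) (hη' : 1 + η ≠ 0) (J : ℕ) (x : ℝ) :
    uEta η x - ∑ j ∈ Finset.range (J + 1), η⁻¹ ^ j * uTerm j x =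
      (-η⁻¹) ^ J * (uTerm 1 x / (1 + η)) := by
  induction J with
  | zero => simp [uEta_eq_uTerm_zero_add hη hη']
  | succ J ih =>
    calc
      _ = (-η⁻¹) ^ J * (uTerm 1 x / (1 + η)) - η⁻¹ ^ (J + 1) * ((-1) ^ J * uTerm 1 x) := by
        rw [Finset.sum_range_succ, ← sub_sub, ih, uTerm_succ J]
      _ = (-η⁻¹) ^ J * (uTerm 1 x * (1 / (1 + η) - η⁻¹)) := by
        rw [neg_pow]
        ring
      _ = (-η⁻¹) ^ (J + 1) * (uTerm 1 x / (1 + η)) := by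
        rw [pow_succ]
        field_simp
        ring

lemma abs_uEta_sub_sum_uTerm_le {η : ℝ} (hη : η ≠ 0) (hη' : 1 + η ≠ 0) (J : ℕ) {x : ℝ}
    (hx : x ∈ Set.Icc (-2 : ℝ) 2) :
    |uEta η x - ∑ j ∈ Finset.range (J + 1), η⁻¹ ^ j * uTerm j x| ≤
      2 / (|η| ^ J * |1 + η|) :=
  calc
    _ = |uTerm 1 x| / (|η| ^ J * |1 + η|) := by
      rw [uEta_sub_sum_uTerm hη hη', abs_mul, abs_pow, abs_neg, abs_inv, abs_div, inv_pow,
        inv_mul_eq_div, div_div, mul_comm |1 + η|]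
    _ ≤ 2 / (|η| ^ J * |1 + η|) := by
      gcongr
      exact abs_uTerm_one_le hx

theorem truncation_error_bound_general (η : ℝ) (hη : 1 < |η|) :
    (∀ J : ℕ, ∀ x ∈ Set.Icc (-2 : ℝ) 2,
      |uEta η x - ∑ j ∈ Finset.range (J + 1), η⁻¹ ^ j * uTerm j x| ≤
        2 / (|η| ^ J * (|η| - 1))) ∧
    TendstoUniformlyOn
      (fun (J : ℕ) (x : ℝ) => ∑ j ∈ Finset.range (J + 1), η⁻¹ ^ j * uTerm j x)
      (uEta η) Filter.atTop (Set.Icc (-2 : ℝ) 2) := by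
  have h_gap : 0 < |η| - 1 := sub_pos.mpr hη
  have h_le : |η| - 1 ≤ |1 + η| := by
    simpa [add_comm] using abs_sub_abs_le_abs_sub η (-1)
  have h_ne : η ≠ 0 := abs_pos.mp (one_pos.trans hη)
  have h_ne' : 1 + η ≠ 0 := abs_pos.mp (h_gap.trans_le h_le)
  have h_bound : ∀ J : ℕ, ∀ x ∈ Set.Icc (-2 : ℝ) 2,
      |uEta η x - ∑ j ∈ Finset.range (J + 1), η⁻¹ ^ j * uTerm j x| ≤
        2 / (|η| ^ J * (|η| - 1)) := fun J x hx =>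
    (abs_uEta_sub_sum_uTerm_le h_ne h_ne' J hx).trans (by gcongr)
  exact ⟨h_bound,
    tendstoUniformlyOn_of_dist_le (tendsto_div_pow_mul_atTop_nhds_zero hη h_gap 2)
      (.of_forall h_bound)⟩

/-- For `η > 1`, the truncation error of the expansion satisfies
`|u_η(x) - ∑_{j=0}^J η^{-j} u_j(x)| ≤ 2/(η^J (η - 1))` on `[-2,2]`; in particular the
partial sums converge uniformly to `u_η` on `[-2,2]`. -/
theorem truncation_error_bound (η : ℝ) (hη : 1 < η) :
    (∀ J : ℕ, ∀ x ∈ Set.Icc (-2 : ℝ) 2,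
      |uEta η x - ∑ j ∈ Finset.range (J + 1), η⁻¹ ^ j * uTerm j x| ≤
        2 / (η ^ J * (η - 1))) ∧
    TendstoUniformlyOn
      (fun (J : ℕ) (x : ℝ) => ∑ j ∈ Finset.range (J + 1), η⁻¹ ^ j * uTerm j x)
      (uEta η) Filter.atTop (Set.Icc (-2 : ℝ) 2) := by
  have h_abs : |η| = η := abs_of_pos (one_pos.trans hη)
  simpa only [h_abs] using truncation_error_bound_general η (h_abs.symm ▸ hη)
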